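/- Let m > p ≥ 2, X a real m×p matrix, and ν_i > 0. Then (i) there exists w* ∈ S_m such that h(w*) = sup_{w ∈ S_m} h(w); and (ii) the set {w ∈ S_m : h(w) = sup_{w' ∈ S_m} h(w')} of A-optimal allocations is convex. -/

import Mathlib

/-!
The proof rests on a variational formula. For a positive semidefinite matrix `M`, the number
`(tr M⁻¹)⁻¹` (read as `0` when `M` is singular) is the minimum of `tr (Bᵀ M B)` over all square
matrices `B` with `tr B = 1`. If `M` is invertible and `t = tr M⁻¹`, the minimum is attained at
`B = t⁻¹ M⁻¹`, since expanding `tr (Cᵀ M C) ≥ 0` for `C = B - t⁻¹ M⁻¹` gives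
`tr (Bᵀ M B) ≥ t⁻¹`. If `M` is singular, with `M v = 0` and `v ≠ 0`, the value `0` is attained at
`B = v vᵀ / |v|²`.

As `XᵀWX` is linear in `w`, the function `hFun X ν` is thus, on nonnegative weights, a pointwise
minimum of the linear functionals `traceForm X ν B` (`hFun_le_traceForm`,
`exists_traceForm_eq_hFun`). Hence it is upper semicontinuous, so it attains its maximum on the
compact simplex, and it is concave, so its set of maximizers is convex.
-/

open Matrix

def dropIdx {p : ℕ} (j : Fin p) (k : Fin (p - 1)) : Fin p :=
  if h : (k : ℕ) < (j : ℕ) then ⟨k, lt_trans h j.isLt⟩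
  else ⟨(k : ℕ) + 1, by have hk := k.isLt; omega⟩

noncomputable def infoM {m p : ℕ} (X : Matrix (Fin m) (Fin p) ℝ) (ν w : Fin m → ℝ) :
    Matrix (Fin p) (Fin p) ℝ :=
  Xᵀ * Matrix.diagonal (fun i => w i * ν i) * X

noncomputable def fFun {m p : ℕ} (X : Matrix (Fin m) (Fin p) ℝ) (ν w : Fin m → ℝ) : ℝ :=
  (infoM X ν w).det

noncomputable def hFun {m p : ℕ} (X : Matrix (Fin m) (Fin p) ℝ) (ν w : Fin m → ℝ) : ℝ :=
  if 0 < fFun X ν w then ((infoM X ν w)⁻¹).trace⁻¹ else 0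

/-- The functional `w ↦ tr (Bᵀ M(w) B)`, where `M(w) = XᵀWX` is the information matrix. -/
noncomputable def traceForm {m p : ℕ} (X : Matrix (Fin m) (Fin p) ℝ) (ν : Fin m → ℝ)
    (B : Matrix (Fin p) (Fin p) ℝ) (w : Fin m → ℝ) : ℝ :=
  (Bᵀ * infoM X ν w * B).trace

lemma infoM_comb {m p : ℕ} (X : Matrix (Fin m) (Fin p) ℝ) (ν v w : Fin m → ℝ) (a b : ℝ) :
    infoM X ν (a • v + b • w) = a • infoM X ν v + b • infoM X ν w := by
  have h : Matrix.diagonal (fun i => (a • v + b • w) i * ν i)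
      = a • Matrix.diagonal (fun i => v i * ν i) + b • Matrix.diagonal (fun i => w i * ν i) := by
    rw [← Matrix.diagonal_smul, ← Matrix.diagonal_smul, Matrix.diagonal_add]
    congr 1
    ext i
    simp only [Pi.add_apply, Pi.smul_apply, smul_eq_mul]
    ring
  simp only [infoM, h, Matrix.mul_add, Matrix.add_mul, Matrix.mul_smul, Matrix.smul_mul]

lemma traceForm_comb {m p : ℕ} (X : Matrix (Fin m) (Fin p) ℝ) (ν : Fin m → ℝ)
    (B : Matrix (Fin p) (Fin p) ℝ) (v w : Fin m → ℝ) (a b : ℝ) :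
    traceForm X ν B (a • v + b • w) = a * traceForm X ν B v + b * traceForm X ν B w := by
  simp only [traceForm, infoM_comb, Matrix.mul_add, Matrix.add_mul, Matrix.mul_smul,
    Matrix.smul_mul, Matrix.trace_add, Matrix.trace_smul, smul_eq_mul]

lemma continuous_traceForm {m p : ℕ} (X : Matrix (Fin m) (Fin p) ℝ) (ν : Fin m → ℝ)
    (B : Matrix (Fin p) (Fin p) ℝ) : Continuous (traceForm X ν B) := by
  unfold traceForm infoM
  fun_prop

lemma infoM_posSemidef {m p : ℕ} (X : Matrix (Fin m) (Fin p) ℝ) (ν w : Fin m → ℝ)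
    (hν : ∀ i, 0 < ν i) (hw : ∀ i, 0 ≤ w i) : (infoM X ν w).PosSemidef := by
  have h : (Matrix.diagonal (fun i => w i * ν i)).PosSemidef :=
    Matrix.PosSemidef.diagonal (fun i => mul_nonneg (hw i) (hν i).le)
  simpa [infoM] using h.conjTranspose_mul_mul_same X

lemma trace_inv_pos {p : ℕ} (hp : 0 < p) {M : Matrix (Fin p) (Fin p) ℝ} (hM : M.PosSemidef)
    (hd : 0 < M.det) : 0 < (M⁻¹).trace := by
  have : Nonempty (Fin p) := ⟨⟨0, hp⟩⟩
  exact (hM.posDef_iff_det_ne_zero.mpr hd.ne').inv.trace_pos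

/-- The lower bound in the variational formula: every `B` of trace `1` bounds `hFun` from above. -/
lemma hFun_le_traceForm {m p : ℕ} (hp : 0 < p) (X : Matrix (Fin m) (Fin p) ℝ) (ν w : Fin m → ℝ)
    (hν : ∀ i, 0 < ν i) (hw : ∀ i, 0 ≤ w i) (B : Matrix (Fin p) (Fin p) ℝ) (hB : B.trace = 1) :
    hFun X ν w ≤ traceForm X ν B w := by
  have hM := infoM_posSemidef X ν w hν hw
  unfold hFun traceForm fFun
  generalize infoM X ν w = M at hM
  have hnn : ∀ C : Matrix (Fin p) (Fin p) ℝ, 0 ≤ (Cᵀ * M * C).trace := fun C => by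
    simpa using (hM.conjTranspose_mul_mul_same C).trace_nonneg
  split_ifs with hd
  · have ht := trace_inv_pos hp hM hd
    have hu : IsUnit M.det := hd.ne'.isUnit
    have hsymm : Mᵀ = M := by simpa using hM.isHermitian.eq
    have hisymm : (M⁻¹)ᵀ = M⁻¹ := by rw [Matrix.transpose_nonsing_inv, hsymm]
    have h := hnn (B - (M⁻¹).trace⁻¹ • M⁻¹)
    generalize htt : (M⁻¹).trace = t at *
    have e : ((B - t⁻¹ • M⁻¹)ᵀ * M * (B - t⁻¹ • M⁻¹)).trace
        = (Bᵀ * M * B).trace - t⁻¹ := by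
      simp only [Matrix.transpose_sub, Matrix.transpose_smul, hisymm, Matrix.sub_mul,
        Matrix.mul_sub, Matrix.smul_mul, Matrix.mul_smul, Matrix.nonsing_inv_mul _ hu,
        Matrix.mul_nonsing_inv_cancel_right _ _ hu, Matrix.one_mul,
        Matrix.trace_sub, Matrix.trace_smul, Matrix.trace_transpose, hB, htt, smul_eq_mul]
      field_simp
      ring
    linarith
  · exact hnn B

/-- The minimum in the variational formula is attained, also when the information matrix is
singular. -/
lemma exists_traceForm_eq_hFun {m p : ℕ} (hp : 0 < p) (X : Matrix (Fin m) (Fin p) ℝ)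
    (ν w : Fin m → ℝ) (hν : ∀ i, 0 < ν i) (hw : ∀ i, 0 ≤ w i) :
    ∃ B : Matrix (Fin p) (Fin p) ℝ, B.trace = 1 ∧ traceForm X ν B w = hFun X ν w := by
  have hM := infoM_posSemidef X ν w hν hw
  unfold hFun traceForm fFun
  generalize infoM X ν w = M at hM
  split_ifs with hd
  · have ht := trace_inv_pos hp hM hd
    have hu : IsUnit M.det := hd.ne'.isUnit
    have hsymm : Mᵀ = M := by simpa using hM.isHermitian.eq
    have hisymm : (M⁻¹)ᵀ = M⁻¹ := by rw [Matrix.transpose_nonsing_inv, hsymm]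
    refine ⟨(M⁻¹).trace⁻¹ • M⁻¹, ?_, ?_⟩
    · rw [Matrix.trace_smul, smul_eq_mul, inv_mul_cancel₀ ht.ne']
    · simp only [Matrix.transpose_smul, hisymm, Matrix.smul_mul, Matrix.mul_smul,
        Matrix.nonsing_inv_mul _ hu, Matrix.one_mul, Matrix.trace_smul, smul_eq_mul]
      field_simp
  · have hd0 : M.det = 0 := by
      by_contra hne
      exact hd (hM.posDef_iff_det_ne_zero.mpr hne).det_pos
    obtain ⟨v, hv, hMv⟩ := Matrix.exists_mulVec_eq_zero_iff.mpr hd0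
    have hvv : v ⬝ᵥ v ≠ 0 := fun h => hv (dotProduct_self_eq_zero.mp h)
    refine ⟨(v ⬝ᵥ v)⁻¹ • Matrix.vecMulVec v v, ?_, ?_⟩
    · rw [Matrix.trace_smul, Matrix.trace_vecMulVec, smul_eq_mul, inv_mul_cancel₀ hvv]
    · rw [Matrix.mul_assoc, Matrix.mul_smul, Matrix.mul_vecMulVec, hMv]
      simp

lemma hFun_upperSemicontinuousOn {m p : ℕ} (hp : 0 < p) (X : Matrix (Fin m) (Fin p) ℝ)
    (ν : Fin m → ℝ) (hν : ∀ i, 0 < ν i) :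
    UpperSemicontinuousOn (hFun X ν) (stdSimplex ℝ (Fin m)) := by
  intro w hw c hc
  obtain ⟨B, hB, hBw⟩ := exists_traceForm_eq_hFun hp X ν w hν hw.1
  have hlt : ∀ᶠ v in nhdsWithin w (stdSimplex ℝ (Fin m)), traceForm X ν B v < c :=
    (continuous_traceForm X ν B).continuousWithinAt.eventually_lt_const (hBw ▸ hc)
  filter_upwards [hlt, self_mem_nhdsWithin] with v hv hvS
  exact (hFun_le_traceForm hp X ν v hν hvS.1 B hB).trans_lt hv

theorem stmt13 {m p : ℕ} (hp : 2 ≤ p) (hmp : p < m)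
    (X : Matrix (Fin m) (Fin p) ℝ) (ν : Fin m → ℝ) (hν : ∀ i, 0 < ν i) :
    (∃ w : Fin m → ℝ, (∀ i, 0 ≤ w i) ∧ ∑ i, w i = 1 ∧
      ∀ v : Fin m → ℝ, (∀ i, 0 ≤ v i) → ∑ i, v i = 1 → hFun X ν v ≤ hFun X ν w) ∧
    Convex ℝ {w : Fin m → ℝ | (∀ i, 0 ≤ w i) ∧ ∑ i, w i = 1 ∧
      ∀ v : Fin m → ℝ, (∀ i, 0 ≤ v i) → ∑ i, v i = 1 → hFun X ν v ≤ hFun X ν w} := by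
  have hp0 : 0 < p := by omega
  constructor
  · have hne : (stdSimplex ℝ (Fin m)).Nonempty :=
      ⟨_, single_mem_stdSimplex ℝ (⟨0, by omega⟩ : Fin m)⟩
    obtain ⟨w, hw, hmax⟩ := (hFun_upperSemicontinuousOn hp0 X ν hν).exists_isMaxOn hne
      (isCompact_stdSimplex ℝ (Fin m))
    exact ⟨w, hw.1, hw.2, fun v hv hv1 => hmax ⟨hv, hv1⟩⟩
  · rintro w₁ ⟨h1, s1, o1⟩ w₂ ⟨h2, s2, o2⟩ a b ha hb hab
    obtain ⟨hn, hs⟩ := convex_stdSimplex ℝ (Fin m) (x := w₁) ⟨h1, s1⟩ (y := w₂) ⟨h2, s2⟩ ha hb hab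
    refine ⟨hn, hs, fun v hv hv1 => ?_⟩
    -- For the `B` attaining the minimum at the convex combination, linearity of `traceForm`
    -- yields the concavity inequality.
    obtain ⟨B, hB, hBw⟩ := exists_traceForm_eq_hFun hp0 X ν _ hν hn
    rw [← hBw, traceForm_comb]
    have e1 := (o1 v hv hv1).trans (hFun_le_traceForm hp0 X ν w₁ hν h1 B hB)
    have e2 := (o2 v hv hv1).trans (hFun_le_traceForm hp0 X ν w₂ hν h2 B hB)
    calc hFun X ν v = a * hFun X ν v + b * hFun X ν v := by rw [← add_mul, hab, one_mul]
      _ ≤ _ := add_le_add (mul_le_mul_of_nonneg_left e1 ha) (mul_le_mul_of_nonneg_left e2 hb)
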